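/- Let G=(V,E) be a multigraph without self-loops, let s ∈ V, let x be a half-integral minimum s-cycle cover of G, and let G'=(V,E') be the multigraph obtained from G by applying the s-cycle cover reduction with respect to s and x. Then fvs(G) = fvs(G'). -/

import Mathlib

/-- A multigraph on vertex type `V` with edge type `E`: each edge has an
unordered pair of endpoints.  Parallel edges are distinguished (they are
different elements of `E`), and self-loops are edges whose endpoint pair is
diagonal. -/
structure Multigraph (V : Type) (E : Type) where
  ends : E → Sym2 V

namespace Multigraph

variable {V E : Type}

/-- A multigraph has no self-loops. -/
def LoopFree (G : Multigraph V E) : Prop := ∀ e : E, ¬ (G.ends e).IsDiag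

/-- The degree of a vertex: the number of incident edges (parallel edges
counted with multiplicity). -/
noncomputable def degree (G : Multigraph V E) (v : V) : ℕ :=
  Nat.card {e : E // v ∈ G.ends e}

/-- A walk `(v₀, e₁, v₁, …, e_l, v_l)` of positive length `l ≥ 1` in which
each edge `eᵢ` joins `v_{i-1}` and `vᵢ`. -/
structure Walk (G : Multigraph V E) where
  len : ℕ
  len_pos : 0 < len
  verts : Fin (len + 1) → V
  edges : Fin len → E
  valid : ∀ i : Fin len, G.ends (edges i) = s(verts i.castSucc, verts i.succ)

namespace Walk

variable {G : Multigraph V E}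

/-- The first vertex of a walk. -/
def start (W : G.Walk) : V := W.verts 0

/-- The last vertex of a walk. -/
def finish (W : G.Walk) : V := W.verts (Fin.last W.len)

/-- A cycle: a closed walk of positive length with pairwise distinct edges and
pairwise distinct vertices (except that the first and last vertex coincide). -/
def IsCycle (W : G.Walk) : Prop :=
  W.start = W.finish ∧ Function.Injective W.edges ∧
    Function.Injective fun i : Fin W.len => W.verts i.castSucc

/-- An `s`-cycle: a walk with `v₀ = v_l = s`, with `vᵢ ≠ s` for `0 < i < l`,
with no U-turns (`eᵢ ≠ e_{i+1}`), and in which every edge occurs at most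
twice. -/
def IsSCycle (W : G.Walk) (s : V) : Prop :=
  W.start = s ∧ W.finish = s ∧
  (∀ i : Fin (W.len + 1), i ≠ 0 → i ≠ Fin.last W.len → W.verts i ≠ s) ∧
  (∀ i j : Fin W.len, (i : ℕ) + 1 = (j : ℕ) → W.edges i ≠ W.edges j) ∧
  (∀ e : E, Nat.card {i : Fin W.len // W.edges i = e} ≤ 2)

/-- The multiplicity of a vertex `v` in the multiset `V(W)` of vertices of a
walk `W`. -/
noncomputable def vertCount (W : G.Walk) (v : V) : ℕ :=
  Nat.card {i : Fin (W.len + 1) // W.verts i = v}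

end Walk

/-- `S` is a feedback vertex set: every cycle of `G` meets `S`
(equivalently, `G − S` contains no cycle). -/
def IsFVS (G : Multigraph V E) (S : Set V) : Prop :=
  ∀ W : G.Walk, W.IsCycle → ∃ i, W.verts i ∈ S

/-- The minimum size of a feedback vertex set. -/
noncomputable def fvs [Fintype V] (G : Multigraph V E) : ℕ :=
  sInf {n : ℕ | ∃ S : Set V, G.IsFVS S ∧ S.ncard = n}

/-- `x : V → ℝ≥0` is an `s`-cycle cover: `x s = 0` and every `s`-cycle `C`
satisfies `x(V(C)) ≥ 1` (vertices counted with multiplicity). -/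
def IsSCycleCover (G : Multigraph V E) (s : V) (x : V → ℝ) : Prop :=
  (∀ v, 0 ≤ x v) ∧ x s = 0 ∧
    ∀ W : G.Walk, W.IsSCycle s → 1 ≤ ∑ i, x (W.verts i)

/-- A function is half-integral if it takes values in `{0, 1/2, 1}`. -/
def HalfIntegral (x : V → ℝ) : Prop := ∀ v, x v = 0 ∨ x v = 1/2 ∨ x v = 1

/-- A minimum `s`-cycle cover. -/
def IsMinSCycleCover [Fintype V] (G : Multigraph V E) (s : V) (x : V → ℝ) : Prop :=
  G.IsSCycleCover s x ∧ ∀ x' : V → ℝ, G.IsSCycleCover s x' → ∑ v, x v ≤ ∑ v, x' v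

/-- An `s`-cycle packing: a nonnegative, finitely supported weighting of the
`s`-cycles such that every vertex `v ≠ s` is used (with multiplicity) with
total weight at most `1`. -/
def IsSCyclePacking (G : Multigraph V E) (s : V) (y : G.Walk →₀ ℝ) : Prop :=
  (∀ W, 0 ≤ y W) ∧ (∀ W, y W ≠ 0 → W.IsSCycle s) ∧
    ∀ v : V, v ≠ s → ∑ W ∈ y.support, (W.vertCount v : ℝ) * y W ≤ 1

/-- The size of an `s`-cycle packing. -/
noncomputable def packingSize {G : Multigraph V E} (y : G.Walk →₀ ℝ) : ℝ :=
  ∑ W ∈ y.support, y W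

/-- Number of edges incident to `v` with `f`-value 1. -/
noncomputable def cnt1 (G : Multigraph V E) (f : E → ℝ) (v : V) : ℕ :=
  Nat.card {e : E // v ∈ G.ends e ∧ f e = 1}

/-- Number of edges incident to `v` with `f`-value 1/2. -/
noncomputable def cntH (G : Multigraph V E) (f : E → ℝ) (v : V) : ℕ :=
  Nat.card {e : E // v ∈ G.ends e ∧ f e = 1/2}

/-- type-O: all incident edges have `f`-value 0. -/
def IsTypeO (G : Multigraph V E) (f : E → ℝ) (v : V) : Prop :=
  ∀ e : E, v ∈ G.ends e → f e = 0

/-- type-I: exactly two incident edges have value 1 and none has value 1/2. -/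
def IsTypeI (G : Multigraph V E) (f : E → ℝ) (v : V) : Prop :=
  G.cnt1 f v = 2 ∧ G.cntH f v = 0

/-- type-H: no incident edge has value 1 and exactly two have value 1/2. -/
def IsTypeH (G : Multigraph V E) (f : E → ℝ) (v : V) : Prop :=
  G.cnt1 f v = 0 ∧ G.cntH f v = 2

/-- type-T: exactly one incident edge has value 1 and exactly two have value 1/2. -/
def IsTypeT (G : Multigraph V E) (f : E → ℝ) (v : V) : Prop :=
  G.cnt1 f v = 1 ∧ G.cntH f v = 2

/-- A basic `s`-cycle packing: `f : E → {0,1/2,1}` with `f(e) ∈ {0,1}` on edges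
incident to `s`, every vertex `v ≠ s` of one of the four types O, I, H, T, and
every cycle consisting of edges of value 1/2 (i.e. every half-integral cycle)
containing an odd number of type-T vertices. -/
def IsBasicSCyclePacking (G : Multigraph V E) (s : V) (f : E → ℝ) : Prop :=
  (∀ e : E, f e = 0 ∨ f e = 1/2 ∨ f e = 1) ∧
  (∀ e : E, s ∈ G.ends e → f e = 0 ∨ f e = 1) ∧
  (∀ v : V, v ≠ s →
    G.IsTypeO f v ∨ G.IsTypeI f v ∨ G.IsTypeH f v ∨ G.IsTypeT f v) ∧
  (∀ W : G.Walk, W.IsCycle → (∀ j, f (W.edges j) = 1/2) →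
    Odd (Nat.card {i : Fin W.len // G.IsTypeT f (W.verts i.castSucc)}))

/-- The size of a basic `s`-cycle packing: `(1/2) · Σ_{e ∈ δ(s)} f(e)`. -/
noncomputable def basicSize [Fintype E] (G : Multigraph V E) (s : V) (f : E → ℝ) : ℝ :=
  (1/2) * ∑ e : E, Set.indicator {e' : E | s ∈ G.ends e'} f e

/-- `u` and `v` are connected by a walk avoiding the vertex set `S` and the
edge set `F` (or `u = v`). -/
def Reach (G : Multigraph V E) (S : Set V) (F : Set E) (u v : V) : Prop :=
  u = v ∨ ∃ W : G.Walk, (∀ i, W.verts i ∉ S) ∧ (∀ j, W.edges j ∉ F) ∧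
    W.start = u ∧ W.finish = v

/-- The edge `e` belongs to the set `B` of the `s`-cycle cover reduction with
respect to the set `X`: `e` joins `s` to some `u ∉ X`, `e` is a bridge of
`G − X` (its endpoints are disconnected in `G − X − e`), and the connected
component of `u` in `G − X − s` is a tree (no cycle of `G − X − s` passes
through a vertex reachable from `u` in `G − X − s`). -/
def InB (G : Multigraph V E) (s : V) (X : Set V) (e : E) : Prop :=
  ∃ u : V, G.ends e = s(s, u) ∧ u ≠ s ∧ u ∉ X ∧ s ∉ X ∧
    ¬ G.Reach X {e} s u ∧
    ¬ ∃ W : G.Walk, W.IsCycle ∧ (∀ i, W.verts i ∉ X ∪ {s}) ∧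
        G.Reach (X ∪ {s}) ∅ u W.start

/-- The graph `G' = (V, E')` obtained from `G` by the `s`-cycle cover
reduction with respect to a half-integral `s`-cycle cover `x`: with
`X = x⁻¹(1)`, insert a double edge (two new parallel edges) between `s` and
each `v ∈ X`, and delete the edges of `B`. -/
def reduced (G : Multigraph V E) (s : V) (x : V → ℝ) :
    Multigraph V ({e : E // ¬ G.InB s {v : V | x v = 1} e} ⊕ ({v : V // x v = 1} × Bool)) where
  ends := fun e =>
    match e with
    | .inl e' => G.ends e'.val
    | .inr p => s(s, p.1.val)

/-- The graph `G − s` obtained by deleting the vertex `s` and all incident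
edges (the vertex `s` is kept as an isolated vertex). -/
def deleteVertex (G : Multigraph V E) (s : V) :
    Multigraph V {e : E // s ∉ G.ends e} where
  ends := fun e => G.ends e.val

/-- An `f`-augmenting walk for a basic `s`-cycle packing `f`:
(1) it starts at `s`; (2) its first edge has value 0; (3) its edges are
pairwise distinct; (4) its vertices `v₀,…,v_{l-1}` are pairwise distinct;
(5) each interior vertex `vᵢ` (`1 ≤ i ≤ l-1`) is type-O, or type-I with
`f(e) = 1` for at least one of `e ∈ {eᵢ, e_{i+1}}`; (6) if the last vertex
`v_l` equals `vᵢ` for some `i < l` then: `v_l = s` and `f(e_l) = 0`, or `v_l`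
is type-O, or `v_l` is type-I and `f(e) = 1` for at least one of
`e ∈ {eᵢ, e_l}`; (7) if `v_l` is a new vertex then it is type-H or type-T. -/
def IsAugmentingWalk (G : Multigraph V E) (s : V) (f : E → ℝ) (W : G.Walk) : Prop :=
  W.start = s ∧
  f (W.edges ⟨0, W.len_pos⟩) = 0 ∧
  Function.Injective W.edges ∧
  Function.Injective (fun i : Fin W.len => W.verts i.castSucc) ∧
  (∀ i : Fin W.len, 0 < i.val →
    (G.IsTypeO f (W.verts i.castSucc) ∨
      (G.IsTypeI f (W.verts i.castSucc) ∧
        (f (W.edges ⟨i.val - 1, Nat.lt_of_le_of_lt (Nat.sub_le _ _) i.isLt⟩) = 1 ∨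
          f (W.edges i) = 1)))) ∧
  (∀ i : Fin W.len, W.finish = W.verts i.castSucc →
    ((W.finish = s ∧ f (W.edges ⟨W.len - 1, Nat.sub_lt W.len_pos Nat.one_pos⟩) = 0) ∨
     (W.finish ≠ s ∧ G.IsTypeO f W.finish) ∨
     (W.finish ≠ s ∧ G.IsTypeI f W.finish ∧
       (f (W.edges ⟨i.val - 1, Nat.lt_of_le_of_lt (Nat.sub_le _ _) i.isLt⟩) = 1 ∨
         f (W.edges ⟨W.len - 1, Nat.sub_lt W.len_pos Nat.one_pos⟩) = 1)))) ∧
  ((∀ i : Fin W.len, W.finish ≠ W.verts i.castSucc) →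
    (G.IsTypeH f W.finish ∨ G.IsTypeT f W.finish))

/-- `g = f_W` is obtained from `f` by augmenting along the walk `W`.
If `v_l = s` (so `h = l`), the values of `f` on `e₁,…,e_l` are flipped
(`f ↦ 1 − f`).  If `v_l ≠ s` equals an earlier vertex `vᵢ` (so `h = i`), the
values on `e₁,…,e_h` are flipped and the values on `e_{h+1},…,e_l` are set to
`1/2`.  If `v_l ≠ s` is a new vertex (type-H or type-T, with `h = l`), the
values on `e₁,…,e_l` are flipped and, on the half-integral cycle `C` of `v_l`
(traversed from `t₀ = v_l` in either direction), the edges of the segment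
`Pᵢ` between consecutive markers `tᵢ, t_{i+1}` (the markers being `v_l`
together with the type-T vertices of `C`) receive value `0` for even `i` and
`1` for odd `i`; the segment index of an edge is the number of type-T
vertices strictly preceding it along the traversal.  All other edges keep
their `f`-value. -/
def AugmentedAlong (G : Multigraph V E) (s : V) (f : E → ℝ) (W : G.Walk) (g : E → ℝ) : Prop :=
  -- Case A : the walk returns to `s`.
  (W.finish = s ∧
    (∀ j : Fin W.len, g (W.edges j) = 1 - f (W.edges j)) ∧
    (∀ e : E, (∀ j, e ≠ W.edges j) → g e = f e)) ∨
  -- Case B : the last vertex is a repeated vertex `vᵢ ≠ s` (type-O or type-I).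
  (W.finish ≠ s ∧
    (∃ i : Fin W.len, W.finish = W.verts i.castSucc ∧
      (∀ j : Fin W.len, j.val < i.val → g (W.edges j) = 1 - f (W.edges j)) ∧
      (∀ j : Fin W.len, i.val ≤ j.val → g (W.edges j) = 1/2) ∧
      (∀ e : E, (∀ j, e ≠ W.edges j) → g e = f e))) ∨
  -- Case C : the last vertex is a new vertex of type-H or type-T.
  (W.finish ≠ s ∧ (∀ i : Fin W.len, W.finish ≠ W.verts i.castSucc) ∧
    (∃ C : G.Walk, C.IsCycle ∧ C.verts 0 = W.finish ∧
      (∀ j, f (C.edges j) = 1/2) ∧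
      (∀ j : Fin W.len, g (W.edges j) = 1 - f (W.edges j)) ∧
      (∀ j : Fin C.len,
        g (C.edges j) =
          if Even (Nat.card {m : Fin C.len //
              1 ≤ m.val ∧ m.val ≤ j.val ∧ G.IsTypeT f (C.verts m.castSucc)})
          then 0 else 1) ∧
      (∀ e : E, (∀ j, e ≠ W.edges j) → (∀ j, e ≠ C.edges j) → g e = f e)))


end Multigraph

namespace Multigraph

variable {V E : Type}

/-- `L` is a list of consecutive darts `(source, edge, target)` from `u` to `v`. -/
def Wk (G : Multigraph V E) : V → List (V × E × V) → V → Prop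
  | u, [], v => u = v
  | u, d :: L, v => d.1 = u ∧ G.ends d.2.1 = s(d.1, d.2.2) ∧ Wk G d.2.2 L v

/-- No U-turns. -/
def NB (L : List (V × E × V)) : Prop := L.IsChain (fun d d' => d.2.1 ≠ d'.2.1)

/-- The reversed dart. -/
def flipD (d : V × E × V) : V × E × V := (d.2.2, d.2.1, d.1)

theorem wk_append {G : Multigraph V E} {A B : List (V × E × V)} {u v : V} :
    G.Wk u (A ++ B) v ↔ ∃ w, G.Wk u A w ∧ G.Wk w B v := by
  induction A generalizing u with
  | nil => simp [Wk]
  | cons d A ih => simp [Wk, ih, and_assoc]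

theorem wk_dart {G : Multigraph V E} {L : List (V × E × V)} {u v : V} (h : G.Wk u L v)
    {d : V × E × V} (hd : d ∈ L) : G.ends d.2.1 = s(d.1, d.2.2) := by
  induction L generalizing u with
  | nil => simp at hd
  | cons a L ih =>
    rcases List.mem_cons.1 hd with rfl | hd
    · exact h.2.1
    · exact ih h.2.2 hd

theorem wk_reverse {G : Multigraph V E} {L : List (V × E × V)} {u v : V} (h : G.Wk u L v) :
    G.Wk v (L.map flipD).reverse u := by
  induction L generalizing u with
  | nil => exact h.symm
  | cons a L ih =>
    rw [List.map_cons, List.reverse_cons, wk_append]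
    refine ⟨a.2.2, ih h.2.2, ?_⟩
    refine ⟨rfl, ?_, h.1⟩
    rw [show (flipD a).2.1 = a.2.1 from rfl, h.2.1, Sym2.eq_swap]; rfl

theorem nb_reverse {L : List (V × E × V)} (h : NB L) : NB (L.map flipD).reverse := by
  unfold NB at *
  rw [List.isChain_reverse, List.isChain_map]
  exact h.imp (fun a b hab => Ne.symm hab)

theorem nb_append {A B : List (V × E × V)} : NB (A ++ B) ↔ NB A ∧ NB B ∧
    ∀ a ∈ A.getLast?, ∀ b ∈ B.head?, a.2.1 ≠ b.2.1 := by
  unfold NB; exact List.isChain_append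

theorem nb_infix {A B : List (V × E × V)} (h : A <:+: B) (hB : NB B) : NB A :=
  List.IsChain.infix hB h

theorem exists_of_not_pairwise {α : Type*} {r : α → α → Prop} {L : List α} (h : ¬ L.Pairwise r) :
    ∃ A d M d' B, L = A ++ d :: (M ++ d' :: B) ∧ ¬ r d d' := by
  induction L with
  | nil => simp at h
  | cons a L ih =>
    by_cases h1 : ∀ b ∈ L, r a b
    · have : ¬ L.Pairwise r := fun h2 => h (List.pairwise_cons.2 ⟨h1, h2⟩)
      obtain ⟨A, d, M, d', B, rfl, hr⟩ := ih this
      exact ⟨a :: A, d, M, d', B, rfl, hr⟩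
    · push Not at h1
      obtain ⟨b, hb, hr⟩ := h1
      obtain ⟨M, B, rfl⟩ := List.append_of_mem hb
      exact ⟨[], a, M, b, B, rfl, hr⟩

theorem wk_get {G : Multigraph V E} {L : List (V × E × V)} {u v : V} (h : G.Wk u L v) (i : ℕ)
    (hi : i < L.length) : L[i].1 = (u :: L.map (fun d => d.2.2))[i]'(by simp; omega) := by
  induction L generalizing u i with
  | nil => simp at hi
  | cons a L ih =>
    cases i with
    | zero => exact h.1
    | succ i =>
      have := ih h.2.2 i (by simpa using hi)
      simpa using this

theorem wk_last {G : Multigraph V E} {L : List (V × E × V)} {u v : V} (h : G.Wk u L v) :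
    (u :: L.map (fun d => d.2.2))[L.length]'(by simp) = v := by
  induction L generalizing u with
  | nil => exact h
  | cons a L ih =>
    have := ih h.2.2
    simpa using this

/-- The walk of a dart list. -/
def toWalk {G : Multigraph V E} {L : List (V × E × V)} {u v : V} (h : G.Wk u L v) (hne : L ≠ []) :
    G.Walk where
  len := L.length
  len_pos := List.length_pos_iff.2 hne
  verts := fun i => (u :: L.map (fun d => d.2.2))[i.val]'(by have := i.isLt; simp; omega)
  edges := fun i => L[i.val].2.1
  valid := by
    intro i
    have h1 := wk_get h i.val i.isLt
    have h2 := wk_dart h (List.getElem_mem i.isLt)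
    rw [h2, h1]
    simp

theorem toWalk_start {G : Multigraph V E} {L : List (V × E × V)} {u v : V} (h : G.Wk u L v)
    (hne : L ≠ []) : (toWalk h hne).start = u := rfl

theorem toWalk_finish {G : Multigraph V E} {L : List (V × E × V)} {u v : V} (h : G.Wk u L v)
    (hne : L ≠ []) : (toWalk h hne).finish = v := wk_last h

theorem toWalk_verts {G : Multigraph V E} {L : List (V × E × V)} {u v : V} (h : G.Wk u L v)
    (hne : L ≠ []) (P : V → Prop) (hu : P u) (hL : ∀ d ∈ L, P d.2.2) (i) :
    P ((toWalk h hne).verts i) := by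
  have : (toWalk h hne).verts i ∈ (u :: L.map (fun d => d.2.2)) := List.getElem_mem _
  rcases List.mem_cons.1 this with h1 | h1
  · rw [h1]; exact hu
  · obtain ⟨d, hd, h2⟩ := List.mem_map.1 h1
    rw [← h2]; exact hL d hd

theorem toWalk_succ {G : Multigraph V E} {L : List (V × E × V)} {u v : V} (h : G.Wk u L v)
    (hne : L ≠ []) (i : Fin L.length) :
    (toWalk h hne).verts (Fin.succ (n := (toWalk h hne).len) i) = L[i.val].2.2 := by
  have : (u :: L.map (fun d => d.2.2))[i.val + 1]'(by simp) = L[i.val].2.2 := by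
    rw [List.getElem_cons_succ, List.getElem_map]
  exact this

theorem toWalk_sum {G : Multigraph V E} {L : List (V × E × V)} {u v : V} (h : G.Wk u L v)
    (hne : L ≠ []) (x : V → ℝ) :
    ∑ i, x ((toWalk h hne).verts i) = x u + (L.map (fun d => x d.2.2)).sum := by
  have e : (toWalk h hne).len = L.length := rfl
  rw [Fin.sum_univ_succ]
  congr 1
  rw [← Fin.sum_univ_getElem]
  refine Fintype.sum_equiv (finCongr (by simp [e])) _ _ ?_
  intro i
  rw [show (toWalk h hne).verts i.succ = (L[i.val]'(i.isLt)).2.2 from toWalk_succ h hne i]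
  simp
  rfl

/-- the dart list of a walk -/
def darts {G : Multigraph V E} (W : G.Walk) : List (V × E × V) :=
  List.ofFn (fun i : Fin W.len => (W.verts i.castSucc, W.edges i, W.verts i.succ))

theorem wk_ofFn {G : Multigraph V E} : ∀ (n : ℕ) (f : Fin (n + 1) → V) (g : Fin n → E)
    (_ : ∀ i : Fin n, G.ends (g i) = s(f i.castSucc, f i.succ)),
    G.Wk (f 0) (List.ofFn (fun i : Fin n => (f i.castSucc, g i, f i.succ))) (f (Fin.last n)) := by
  intro n
  induction n with
  | zero => intro f g h; simp [Wk]
  | succ n ih =>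
    intro f g h
    rw [List.ofFn_succ]
    refine ⟨rfl, h 0, ?_⟩
    exact ih (fun i => f i.succ) (fun i => g i.succ) (fun i => h i.succ)

theorem wk_darts {G : Multigraph V E} (W : G.Walk) : G.Wk W.start (darts W) W.finish :=
  wk_ofFn W.len W.verts W.edges W.valid

theorem mem_darts {G : Multigraph V E} {W : G.Walk} {d : V × E × V} :
    d ∈ darts W ↔ ∃ i : Fin W.len, d = (W.verts i.castSucc, W.edges i, W.verts i.succ) := by
  unfold darts
  rw [List.mem_ofFn]
  constructor
  · rintro ⟨i, rfl⟩; exact ⟨i, rfl⟩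
  · rintro ⟨i, rfl⟩; exact ⟨i, rfl⟩

theorem darts_pairwise {G : Multigraph V E} {W : G.Walk} (h : Function.Injective W.edges) :
    (darts W).Pairwise (fun d d' => d.2.1 ≠ d'.2.1) := by
  unfold darts
  rw [List.pairwise_ofFn]
  intro i j hij he
  exact hij.ne (h he)

/-- A closed walk without interior U-turns contains a cycle. -/
theorem exists_cycle {G : Multigraph V E} (S : Set V) : ∀ (n : ℕ) (L : List (V × E × V)) (u : V),
    L.length ≤ n → L ≠ [] → G.Wk u L u → NB L → (∀ d ∈ L, d.2.2 ∉ S) →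
    ∃ W : G.Walk, W.IsCycle ∧ ∀ i, W.verts i ∉ S := by
  intro n
  induction n with
  | zero => intro L u hl hne; simp at hl; contradiction
  | succ n ih =>
    intro L u hl hne hw hnb hS
    by_cases hp : L.Pairwise (fun d d' => d.1 ≠ d'.1)
    · have huS : u ∉ S := by
        have h1 := wk_last hw
        have : (u :: L.map (fun d => d.2.2))[L.length]'(by simp) ∈ L.map (fun d => d.2.2) := by
          obtain ⟨k, hk⟩ : ∃ k, L.length = k + 1 :=
            Nat.exists_eq_succ_of_ne_zero (by simpa using hne)
          simp only [hk, List.getElem_cons_succ]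
          exact List.getElem_mem _
        rw [h1] at this
        obtain ⟨d, hd, h2⟩ := List.mem_map.1 this
        rw [← h2]; exact hS d hd
      have hinj : ∀ i j (hi : i < L.length) (hj : j < L.length), L[i].1 = L[j].1 → i = j := by
        intro i j hi hj hij
        rw [List.pairwise_iff_getElem] at hp
        rcases lt_trichotomy i j with h | h | h
        · exact absurd hij (hp i j hi hj h)
        · exact h
        · exact absurd hij.symm (hp j i hj hi h)
      have hedge : ∀ i j (hi : i < L.length) (hj : j < L.length), i < j →
          L[i].2.1 ≠ L[j].2.1 := by
        intro i j hi hj hij he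
        have h1 := wk_dart hw (List.getElem_mem hi)
        have h2 := wk_dart hw (List.getElem_mem hj)
        rw [he, h2, Sym2.eq_iff] at h1
        rcases h1 with ⟨h1, _⟩ | ⟨h1, _⟩
        · exact hij.ne' (hinj _ _ _ _ h1)
        · have h3 := wk_get hw (i+1) (by omega)
          simp only [List.getElem_cons_succ, List.getElem_map] at h3
          have h4 := hinj _ _ _ _ (h1.trans h3.symm)
          subst h4
          exact (List.isChain_iff_getElem.1 hnb i (by omega)) he
      refine ⟨toWalk hw hne, ⟨?_, ?_, ?_⟩, ?_⟩
      · rw [toWalk_start, toWalk_finish]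
      · intro i j hij
        rcases lt_trichotomy i.val j.val with h | h | h
        · exact absurd hij (hedge _ _ i.isLt j.isLt h)
        · exact Fin.ext h
        · exact absurd hij.symm (hedge _ _ j.isLt i.isLt h)
      · intro i j hij
        apply Fin.ext
        refine hinj _ _ i.isLt j.isLt ?_
        rw [wk_get hw _ i.isLt, wk_get hw _ j.isLt]
        exact hij
      · exact toWalk_verts hw hne (· ∉ S) huS hS
    · obtain ⟨A, d, M, d', B, rfl, hr⟩ := exists_of_not_pairwise hp
      simp only [not_not] at hr
      refine ih (d :: M) d.1 ?_ (by simp) ?_ ?_ ?_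
      · simp at hl ⊢; omega
      · rw [show A ++ d :: (M ++ d' :: B) = A ++ ((d :: M) ++ d' :: B) by simp, wk_append] at hw
        obtain ⟨w, _, hw⟩ := hw
        rw [wk_append] at hw
        obtain ⟨w', h1, h2⟩ := hw
        have : w' = d.1 := by rw [hr]; exact h2.1.symm
        rw [this] at h1
        exact ⟨rfl, h1.2.1, h1.2.2⟩
      · exact nb_infix ⟨A, d' :: B, by simp⟩ hnb
      · intro a ha; apply hS; simp only [List.mem_cons, List.mem_append] at ha ⊢; tauto

theorem edge_count {G : Multigraph V E} {L : List (V × E × V)} {u v : V} (hw : G.Wk u L v)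
    (hp : L.Nodup) (e : E) : Nat.card {i : Fin L.length // L[i.val].2.1 = e} ≤ 2 := by
  classical
  obtain ⟨a, b, hab⟩ : ∃ a b, s(a, b) = G.ends e := by
    induction h : G.ends e with
    | h a b => exact ⟨a, b, rfl⟩
  have hm : ∀ i : {i : Fin L.length // L[i.val].2.1 = e},
      L[i.1.val] ∈ ({(a, e, b), (b, e, a)} : Finset (V × E × V)) := by
    intro ⟨i, hi⟩
    have h1 := wk_dart hw (List.getElem_mem i.isLt)
    rw [hi, ← hab, Sym2.eq_iff] at h1
    simp only [Finset.mem_insert, Finset.mem_singleton, Prod.ext_iff]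
    rcases h1 with h1 | h1
    · left; exact ⟨h1.1.symm, hi, h1.2.symm⟩
    · right; exact ⟨h1.2.symm, hi, h1.1.symm⟩
  have := Nat.card_le_card_of_injective (β := ({(a, e, b), (b, e, a)} : Finset (V × E × V)))
    (fun i => ⟨_, hm i⟩) (by
      intro i j hij
      simp only [Subtype.mk.injEq] at hij
      exact Subtype.ext (Fin.ext ((List.Nodup.getElem_inj_iff hp).1 hij)))
  refine this.trans ?_
  rw [Nat.card_eq_fintype_card, Fintype.card_coe]
  exact Finset.card_le_two

/-- A closed walk at `s` without interior U-turns yields an `s`-cycle of at most its weight. -/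
theorem exists_scycle {G : Multigraph V E} (s : V) (x : V → ℝ) (hx0 : ∀ v, 0 ≤ x v)
    (hxs : x s = 0) : ∀ (n : ℕ) (L : List (V × E × V)),
    L.length ≤ n → L ≠ [] → G.Wk s L s → NB L →
    ∃ W : G.Walk, W.IsSCycle s ∧ ∑ i, x (W.verts i) ≤ (L.map (fun d => x d.2.2)).sum := by
  intro n
  have hnn : ∀ L : List (V × E × V), 0 ≤ (L.map (fun d => x d.2.2)).sum := by
    intro L; apply List.sum_nonneg; intro a ha
    obtain ⟨d, _, rfl⟩ := List.mem_map.1 ha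
    exact hx0 _
  induction n with
  | zero => intro L hl hne; simp at hl; contradiction
  | succ n ih =>
    intro L hl hne hw hnb
    by_cases hp : L.Nodup
    · by_cases hi : ∃ k, ∃ hk : k + 1 < L.length, L[k].2.2 = s
      · obtain ⟨k, hk, hks⟩ := hi
        have hw' := hw
        rw [← List.take_append_drop (k+1) L, wk_append] at hw'
        obtain ⟨w, h1, h2⟩ := hw'
        have hw2 : w = s := by
          rw [← hks, ← wk_last h1]
          have : (L.take (k+1)).length = k + 1 := by simp; omega
          simp [this]
        rw [hw2] at h1
        obtain ⟨W, hW, hs⟩ := ih (L.take (k+1)) (by simp; omega)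
          (by intro h; simp at h; exact hne h) h1
          (nb_infix (List.take_prefix _ _).isInfix hnb)
        refine ⟨W, hW, hs.trans ?_⟩
        conv_rhs => rw [← List.take_append_drop (k+1) L]
        rw [List.map_append, List.sum_append]
        linarith [hnn (L.drop (k+1))]
      · push Not at hi
        refine ⟨toWalk hw hne, ⟨rfl, toWalk_finish hw hne, ?_, ?_, ?_⟩, ?_⟩
        · intro i h0 hl
          obtain ⟨j, rfl⟩ := Fin.exists_succ_eq_of_ne_zero h0
          have h3 : j.val + 1 < L.length := by
            have h4 := j.isLt
            have h5 : (toWalk hw hne).len = L.length := rfl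
            rcases Nat.lt_or_ge (j.val+1) L.length with h | h
            · exact h
            · exfalso; apply hl; apply Fin.ext; simp; omega
          have := hi j.val h3
          intro h6; exact this ((toWalk_succ hw hne j).symm.trans h6)
        · rintro ⟨i, hi'⟩ ⟨j, hj'⟩ hij
          simp only at hij
          subst hij
          exact List.isChain_iff_getElem.1 hnb i hj'
        · intro e; exact edge_count hw hp e
        · rw [toWalk_sum, hxs]; simp
    · obtain ⟨A, d, M, d', B, rfl, hr⟩ := exists_of_not_pairwise hp
      simp only [ne_eq, not_not] at hr
      subst hr
      have hw1 := hw
      rw [wk_append] at hw1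
      obtain ⟨w, h1, h2⟩ := hw1
      have h3 := h2.2.2
      rw [wk_append] at h3
      obtain ⟨w', h4, h5⟩ := h3
      obtain ⟨W, hW, hs⟩ := ih (A ++ d :: B) (by simp at hl ⊢; omega) (by simp)
        (wk_append.2 ⟨w, h1, h2.1, h2.2.1, h5.2.2⟩) (by
          have e1 := (nb_append.1 hnb)
          refine nb_append.2 ⟨e1.1, nb_infix ⟨A ++ d :: M, [], by simp⟩ hnb, ?_⟩
          simpa using e1.2.2)
      refine ⟨W, hW, hs.trans ?_⟩
      simp only [List.map_append, List.map_cons, List.sum_append, List.sum_cons]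
      have := hnn M
      have := hx0 d.2.2
      linarith

end Multigraph
namespace Multigraph

variable {V E : Type}

/-- The set of vertices reachable from `s` by stepping to vertices of `A`. -/
def RS (G : Multigraph V E) (A : Set V) (s : V) : Set V :=
  {v | Relation.ReflTransGen (fun u v => v ∈ A ∧ ∃ e, G.ends e = s(u, v)) s v}

theorem self_mem_RS {G : Multigraph V E} {A : Set V} {s : V} : s ∈ G.RS A s :=
  Relation.ReflTransGen.refl

theorem RS_step {G : Multigraph V E} {A : Set V} {s u v : V} {e : E} (hu : u ∈ G.RS A s)
    (he : G.ends e = s(u, v)) (hv : v ∈ A) : v ∈ G.RS A s :=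
  Relation.ReflTransGen.tail hu ⟨hv, e, he⟩

theorem RS_sub {G : Multigraph V E} {A : Set V} {s v : V} (hs : s ∈ A) (hv : v ∈ G.RS A s) :
    v ∈ A := by
  rcases Relation.ReflTransGen.cases_tail hv with h | ⟨c, _, h⟩
  · rw [h]; exact hs
  · exact h.1

theorem RS_mono {G : Multigraph V E} {A B : Set V} {s v : V} (hAB : A ⊆ B) (hv : v ∈ G.RS A s) :
    v ∈ G.RS B s :=
  Relation.ReflTransGen.mono (fun _ _ h => ⟨hAB h.1, h.2⟩) _ _ hv

theorem rs_path {G : Multigraph V E} {A : Set V} {s a : V} (ha : a ∈ G.RS A s) :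
    ∃ P, G.Wk s P a ∧ NB P ∧ ∀ d ∈ P, d.1 ∈ G.RS A s ∧ d.2.2 ∈ G.RS A s := by
  have ha' : Relation.ReflTransGen (fun u v => v ∈ A ∧ ∃ e, G.ends e = s(u, v)) s a := ha
  clear ha
  induction ha' with
  | refl => exact ⟨[], rfl, List.IsChain.nil, by simp⟩
  | @tail b c hb hbc ih =>
    obtain ⟨P, hw, hn, hP⟩ := ih
    obtain ⟨hcA, e, he⟩ := hbc
    have hbR : b ∈ G.RS A s := hb
    have hcR : c ∈ G.RS A s := RS_step hbR he hcA
    rcases List.eq_nil_or_concat P with rfl | ⟨M, f, rfl⟩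
    · have hsb : s = b := hw
      refine ⟨[(b, e, c)], ⟨hsb.symm, he, rfl⟩, List.IsChain.singleton _, ?_⟩
      simp [hbR, hcR]
    · simp only [List.concat_eq_append] at *
      obtain ⟨w, h1, h2⟩ := wk_append.1 hw
      obtain ⟨h3, h4, h5⟩ := h2
      have h5 : f.2.2 = b := h5
      by_cases hf : f.2.1 = e
      · have : w = c := by
          rw [hf, he, h5, Sym2.eq_iff] at h4
          rcases h4 with ⟨h6, h7⟩ | ⟨h6, h7⟩
          · rw [← h3, h7, ← h6]
          · rw [← h3, h7]
        rw [this] at h1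
        exact ⟨M, h1, (nb_append.1 hn).1, fun d hd => hP d (by simp [hd])⟩
      · refine ⟨(M ++ [f]) ++ [(b, e, c)], wk_append.2 ⟨b, hw, rfl, he, rfl⟩, ?_, ?_⟩
        · refine nb_append.2 ⟨hn, List.IsChain.singleton _, ?_⟩
          simpa using hf
        · intro d hd
          rcases List.mem_append.1 hd with hd | hd
          · exact hP d hd
          · simp only [List.mem_singleton] at hd
            subst hd; exact ⟨hbR, hcR⟩

theorem join {G : Multigraph V E} {A : Set V} {s a b : V} (ha : a ∈ G.RS A s) (hb : b ∈ G.RS A s)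
    {L : List (V × E × V)} (hw : G.Wk a L b) (hn : NB L) (hne : L ≠ [])
    (h1 : ∀ d ∈ L.head?, d.2.2 ∉ G.RS A s) (h2 : ∀ d ∈ L.getLast?, d.1 ∉ G.RS A s) :
    ∃ P Q, G.Wk s (P ++ (L ++ Q)) s ∧ NB (P ++ (L ++ Q)) ∧ (∀ d ∈ P, d.2.2 ∈ G.RS A s) ∧
      ∀ d ∈ Q, d.2.2 ∈ G.RS A s := by
  obtain ⟨P, hPw, hPn, hP⟩ := rs_path ha
  obtain ⟨Q, hQw, hQn, hQ⟩ := rs_path hb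
  have hQ' : ∀ d ∈ (Q.map flipD).reverse, d.1 ∈ G.RS A s ∧ d.2.2 ∈ G.RS A s := by
    intro d hd
    simp only [List.mem_reverse, List.mem_map] at hd
    obtain ⟨q, hq, rfl⟩ := hd
    exact ⟨(hQ q hq).2, (hQ q hq).1⟩
  have hQw' := wk_reverse hQw
  refine ⟨P, (Q.map flipD).reverse, wk_append.2 ⟨a, hPw, wk_append.2 ⟨b, hw, hQw'⟩⟩, ?_,
    fun d hd => (hP d hd).2, fun d hd => (hQ' d hd).2⟩
  refine nb_append.2 ⟨hPn, nb_append.2 ⟨hn, nb_reverse hQn, ?_⟩, ?_⟩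
  · intro l hl q hq heq
    have e1 := wk_dart hw (List.mem_of_mem_getLast? hl)
    have e2 := wk_dart hQw' (List.mem_of_mem_head? hq)
    have e3 := hQ' q (List.mem_of_mem_head? hq)
    rw [heq, e2, Sym2.eq_iff] at e1
    apply h2 l hl
    rcases e1 with e1 | e1
    · rw [← e1.1]; exact e3.1
    · rw [← e1.2]; exact e3.2
  · intro p hp l hl heq
    have hl : l ∈ L.head? := by
      cases L with
      | nil => exact absurd rfl hne
      | cons a L => simpa using hl
    have e1 := wk_dart hw (List.mem_of_mem_head? hl)
    have e2 := wk_dart hPw (List.mem_of_mem_getLast? hp)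
    have e3 := hP p (List.mem_of_mem_getLast? hp)
    rw [← heq, e2, Sym2.eq_iff] at e1
    apply h1 l hl
    rcases e1 with e1 | e1
    · rw [← e1.2]; exact e3.2
    · rw [← e1.1]; exact e3.1

theorem two_edges {G : Multigraph V E} {A : Set V} {s a b v : V} {e e' : E}
    (ha : a ∈ G.RS A s) (hb : b ∈ G.RS A s) (hv : v ∉ G.RS A s) (hee : e ≠ e')
    (he : G.ends e = s(a, v)) (he' : G.ends e' = s(b, v)) :
    ∃ P Q, G.Wk s (P ++ ([(a, e, v), (v, e', b)] ++ Q)) s ∧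
      NB (P ++ ([(a, e, v), (v, e', b)] ++ Q)) ∧ (∀ d ∈ P, d.2.2 ∈ G.RS A s) ∧
      ∀ d ∈ Q, d.2.2 ∈ G.RS A s := by
  refine join ha hb ⟨rfl, he, rfl, by rw [he', Sym2.eq_swap], rfl⟩ ?_ (by simp) ?_ ?_
  · simpa [NB] using hee
  · simpa using hv
  · simpa using hv

theorem propagate {G : Multigraph V E} {A : Set V} {v w : V} {e : E} (hv : v ∈ A) (hw : w ∈ A)
    (he : G.ends e = s(w, v)) {L : List (V × E × V)} (hne : L ≠ []) (hL : G.Wk v L v) (hn : NB L)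
    (hA : ∀ d ∈ L, d.2.2 ∈ A) :
    ∃ L' : List (V × E × V), L' ≠ [] ∧ G.Wk w L' w ∧ NB L' ∧ ∀ d ∈ L', d.2.2 ∈ A := by
  by_cases hvw : w = v
  · subst hvw; exact ⟨L, hne, hL, hn, hA⟩
  have he2 : G.ends e = s(v, w) := by rw [he, Sym2.eq_swap]
  rcases L with _ | ⟨d, L1⟩
  · exact absurd rfl hne
  by_cases hd : d.2.1 = e
  · obtain ⟨h1, h2, h3⟩ := hL
    have hdw : d.2.2 = w := by
      rw [hd, he, h1, Sym2.eq_iff] at h2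
      rcases h2 with h2 | h2
      · exact absurd h2.1 hvw
      · exact h2.1.symm
    rw [hdw] at h3
    rcases List.eq_nil_or_concat L1 with rfl | ⟨M, f, rfl⟩
    · exact absurd h3 hvw
    simp only [List.concat_eq_append] at *
    by_cases hf : f.2.1 = e
    · obtain ⟨z, h4, h5, h6, h7⟩ := wk_append.1 h3
      have h7 : f.2.2 = v := h7
      have hz : z = w := by
        rw [hf, he, h7, Sym2.eq_iff] at h6
        rcases h6 with h6 | h6
        · rw [← h5, h6.1]
        · exact absurd h6.1 hvw
      rw [hz] at h4
      refine ⟨M, ?_, h4, nb_infix ⟨[d], [f], by simp⟩ hn, fun a ha => hA a (by simp [ha])⟩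
      rintro rfl
      simp only [NB, List.nil_append, List.isChain_cons_cons] at hn
      exact hn.1 (hd.trans hf.symm)
    · refine ⟨(M ++ [f]) ++ [(v, e, w)], by simp, wk_append.2 ⟨v, h3, rfl, he2, rfl⟩, ?_, ?_⟩
      · refine nb_append.2 ⟨nb_infix ⟨[d], [], by simp⟩ hn, List.IsChain.singleton _, ?_⟩
        simpa using hf
      · intro a ha
        rcases List.mem_append.1 ha with ha | ha
        · exact hA a (List.mem_cons_of_mem _ ha)
        · simp only [List.mem_singleton] at ha; subst ha; exact hw
  · by_cases hf : ∃ M f, d :: L1 = M ++ [f] ∧ f.2.1 = e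
    · obtain ⟨M, f, hM, hfe⟩ := hf
      rw [hM] at hL hn hA
      obtain ⟨z, h4, h5, h6, h7⟩ := wk_append.1 hL
      have h7 : f.2.2 = v := h7
      have hz : z = w := by
        rw [hfe, he, h7, Sym2.eq_iff] at h6
        rcases h6 with h6 | h6
        · rw [← h5, h6.1]
        · exact absurd h6.1 hvw
      rw [hz] at h4
      refine ⟨(w, e, v) :: M, by simp, ⟨rfl, he, h4⟩, ?_, ?_⟩
      · refine nb_append (A := [(w, e, v)]).2
          ⟨List.IsChain.singleton _, (nb_append.1 hn).1, ?_⟩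
        intro a ha b hb
        simp only [List.getLast?_singleton, Option.mem_some_iff] at ha
        subst ha
        cases M with
        | nil => simp at hb
        | cons m M =>
          simp only [List.cons_append, List.cons.injEq] at hM
          simp only [List.head?_cons, Option.mem_some_iff] at hb
          rw [← hb, ← hM.1]; exact fun h => hd h.symm
      · intro a ha
        rcases List.mem_cons.1 ha with rfl | ha
        · exact hv
        · exact hA a (by simp [ha])
    · refine ⟨(w, e, v) :: ((d :: L1) ++ [(v, e, w)]), by simp,
        ⟨rfl, he, wk_append.2 ⟨v, hL, rfl, he2, rfl⟩⟩, ?_, ?_⟩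
      · refine nb_append (A := [(w, e, v)]).2 ⟨List.IsChain.singleton _,
          nb_append.2 ⟨hn, List.IsChain.singleton _, ?_⟩, ?_⟩
        · intro a ha b hb hab
          simp only [List.head?_cons, Option.mem_some_iff] at hb
          subst hb
          obtain ⟨M, hM⟩ := List.mem_getLast?_eq_getLast ha
          exact hf ⟨(d :: L1).dropLast, a, by rw [hM]; exact (List.dropLast_append_getLast _).symm, hab⟩
        · intro a ha b hb
          simp only [List.getLast?_singleton, Option.mem_some_iff] at ha
          subst ha
          simp only [List.head?_cons, Option.mem_some_iff] at hb
          rw [← hb]; exact fun h => hd h.symm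
      · intro a ha
        rcases List.mem_cons.1 ha with rfl | ha
        · exact hv
        rcases List.mem_append.1 ha with ha | ha
        · exact hA a ha
        · simp only [List.mem_singleton] at ha; subst ha; exact hw

theorem closed_at_s {G : Multigraph V E} {A : Set V} {s c : V} (hc : c ∈ G.RS A s)
    {L : List (V × E × V)} (hne : L ≠ []) (hL : G.Wk c L c) (hn : NB L)
    (hA : ∀ d ∈ L, d.2.2 ∈ G.RS A s) :
    ∃ L' : List (V × E × V), L' ≠ [] ∧ G.Wk s L' s ∧ NB L' ∧ ∀ d ∈ L', d.2.2 ∈ G.RS A s := by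
  have hc' : Relation.ReflTransGen (fun u v => v ∈ A ∧ ∃ e, G.ends e = s(u, v)) s c := hc
  clear hc
  induction hc' generalizing L with
  | refl => exact ⟨L, hne, hL, hn, hA⟩
  | @tail b c hb hbc ih =>
    have hb' : b ∈ G.RS A s := hb
    obtain ⟨hcA, e, he⟩ := hbc
    obtain ⟨L', h1, h2, h3, h4⟩ := propagate (RS_step hb' he hcA) hb' he hne hL hn hA
    exact ih h1 h2 h3 h4

theorem split_first {α : Type*} {p : α → Prop} {L : List α} (h : ∃ d ∈ L, p d) :
    ∃ A d B, L = A ++ d :: B ∧ p d ∧ ∀ a ∈ A, ¬ p a := by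
  induction L with
  | nil => simp at h
  | cons a L ih =>
    by_cases ha : p a
    · exact ⟨[], a, L, rfl, ha, by simp⟩
    · have : ∃ d ∈ L, p d := by
        obtain ⟨d, hd, hp⟩ := h
        rcases List.mem_cons.1 hd with rfl | hd
        · exact absurd hp ha
        · exact ⟨d, hd, hp⟩
      obtain ⟨A, d, B, rfl, h1, h2⟩ := ih this
      refine ⟨a :: A, d, B, rfl, h1, ?_⟩
      intro b hb
      rcases List.mem_cons.1 hb with rfl | hb
      · exact ha
      · exact h2 b hb

theorem wk_end {G : Multigraph V E} {p : V → Prop} {L : List (V × E × V)} {u w : V}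
    (h : G.Wk u L w) (hu : p u) (hL : ∀ d ∈ L, p d.2.2) : p w := by
  induction L generalizing u with
  | nil => rw [← show u = w from h]; exact hu
  | cons a L ih =>
    exact ih h.2.2 (hL a (by simp)) (fun d hd => hL d (by simp [hd]))

theorem sum_eq_zero {L : List (V × E × V)} {x : V → ℝ} (h : ∀ d ∈ L, x d.2.2 = 0) :
    (L.map (fun d => x d.2.2)).sum = 0 := by
  apply List.sum_eq_zero
  intro a ha
  obtain ⟨d, hd, rfl⟩ := List.mem_map.1 ha
  exact h d hd

/-- `v` has two edges into `A`. -/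
def Two (G : Multigraph V E) (A : Set V) (v : V) : Prop :=
  ∃ e e' a a', e ≠ e' ∧ a ∈ A ∧ a' ∈ A ∧ G.ends e = s(a, v) ∧ G.ends e' = s(a', v)

/-- `v` has an edge into `A`. -/
def One (G : Multigraph V E) (A : Set V) (v : V) : Prop :=
  ∃ e a, a ∈ A ∧ G.ends e = s(a, v)

open Classical in
/-- the boundary cover of `A` -/
noncomputable def bdry (G : Multigraph V E) (A : Set V) (v : V) : ℝ :=
  if v ∈ A then 0 else if G.Two A v then 1 else if G.One A v then 1 / 2 else 0

theorem bdry_nonneg (G : Multigraph V E) (A : Set V) (v : V) : 0 ≤ G.bdry A v := by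
  unfold bdry; split_ifs <;> norm_num

theorem bdry_cover {G : Multigraph V E} {A : Set V} {s : V} (hs : s ∈ A)
    (hA : ∀ W : G.Walk, W.IsSCycle s → ∃ i, W.verts i ∉ A) : G.IsSCycleCover s (G.bdry A) := by
  classical
  refine ⟨bdry_nonneg G A, by simp [bdry, hs], ?_⟩
  intro W hW
  let F : Finset (Fin (W.len + 1)) := Finset.univ.filter (fun i => W.verts i ∉ A)
  have hF : F.Nonempty := by
    obtain ⟨i, hi⟩ := hA W hW
    exact ⟨i, by simp [F, hi]⟩
  obtain ⟨i, hiF, himin⟩ := F.exists_min_image id hF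
  obtain ⟨j, hjF, hjmax⟩ := F.exists_max_image id hF
  have hiA : W.verts i ∉ A := by simpa [F] using hiF
  have hjA : W.verts j ∉ A := by simpa [F] using hjF
  have himin' : ∀ k, k < i → W.verts k ∈ A := by
    intro k hk; by_contra h
    exact absurd (himin k (by simp [F, h])) (not_le.2 hk)
  have hjmax' : ∀ k, j < k → W.verts k ∈ A := by
    intro k hk; by_contra h
    exact absurd (hjmax k (by simp [F, h])) (not_le.2 hk)
  have hi0 : i ≠ 0 := by
    rintro rfl; apply hiA
    rw [show W.verts 0 = s from hW.1]; exact hs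
  have hjl : j ≠ Fin.last _ := by
    rintro rfl; apply hjA
    rw [show W.verts (Fin.last _) = s from hW.2.1]; exact hs
  obtain ⟨a, rfl⟩ := Fin.exists_succ_eq_of_ne_zero hi0
  obtain ⟨b, rfl⟩ := Fin.exists_castSucc_eq.2 hjl
  have haA := himin' a.castSucc Fin.castSucc_lt_succ
  have hbA := hjmax' b.succ Fin.castSucc_lt_succ
  have hva := W.valid a
  have hvb := W.valid b
  rw [Sym2.eq_swap] at hvb
  by_cases hab : a.succ = b.castSucc
  · have hne := hW.2.2.2.1 a b (by simpa [Fin.ext_iff] using hab)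
    have hT : G.Two A (W.verts b.castSucc) :=
      ⟨_, _, _, _, hne, haA, hbA, by rw [hva, hab], hvb⟩
    have h1 : G.bdry A (W.verts b.castSucc) = 1 := by
      unfold bdry; rw [if_neg hjA, if_pos hT]
    rw [← h1]
    exact Finset.single_le_sum (f := fun i => G.bdry A (W.verts i))
      (fun i _ => bdry_nonneg G A _) (Finset.mem_univ b.castSucc)
  · have h1 : ∀ v, v ∉ A → G.One A v → 1 / 2 ≤ G.bdry A v := by
      intro v hv ho
      unfold bdry; rw [if_neg hv]
      split_ifs <;> norm_num
    have h2 := h1 _ hiA ⟨_, _, haA, hva⟩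
    have h3 := h1 _ hjA ⟨_, _, hbA, hvb⟩
    have h4 := Finset.sum_le_sum_of_subset_of_nonneg (f := fun i => G.bdry A (W.verts i))
      (Finset.subset_univ {a.succ, b.castSucc}) (fun i _ _ => bdry_nonneg G A _)
    rw [Finset.sum_pair hab] at h4
    linarith

theorem pw_rotate {A B : List (V × E × V)}
    (h : (A ++ B).Pairwise (fun d d' => d.2.1 ≠ d'.2.1)) :
    (B ++ A).Pairwise (fun d d' => d.2.1 ≠ d'.2.1) :=
  (List.perm_append_comm.pairwise_iff (fun {_ _} h => Ne.symm h)).1 h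

end Multigraph
namespace Multigraph

variable {V E : Type}

theorem wk_rotate {G : Multigraph V E} {A B : List (V × E × V)} {d : V × E × V} {u : V}
    (h : G.Wk u (A ++ d :: B) u) : G.Wk d.1 (d :: B ++ A) d.1 := by
  obtain ⟨w, h1, h2⟩ := wk_append.1 h
  rw [h2.1]
  exact wk_append.2 ⟨u, h2, h1⟩

/-- Persistence: a feedback vertex set avoiding `s` can be replaced by one containing `X`. -/
theorem persist [Fintype V] (G : Multigraph V E) (s : V) (x : V → ℝ)
    (hx : G.IsMinSCycleCover s x) (hhalf : HalfIntegral x) (S : Set V) (hS : G.IsFVS S)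
    (hs : s ∉ S) : ∃ S' : Set V, G.IsFVS S' ∧ S'.ncard ≤ S.ncard ∧ {v | x v = 1} ⊆ S' := by
  classical
  obtain ⟨⟨hx0, hxs, hcov⟩, hmin⟩ := hx
  obtain ⟨R, hRdef⟩ : ∃ R, R = G.RS {v | x v = 0} s := ⟨_, rfl⟩
  obtain ⟨R1, hR1def⟩ : ∃ R1, R1 = G.RS ({v | x v = 0} \ S) s := ⟨_, rfl⟩
  have hsR : s ∈ R := hRdef ▸ self_mem_RS
  have hsR1 : s ∈ R1 := hR1def ▸ self_mem_RS
  have hRx : ∀ v ∈ R, x v = 0 := fun v hv => by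
    rw [hRdef] at hv; exact RS_sub (A := {v | x v = 0}) hxs hv
  have hR1S : ∀ v ∈ R1, v ∉ S := fun v hv => by
    rw [hR1def] at hv; exact (RS_sub (A := {v | x v = 0} \ S) ⟨hxs, hs⟩ hv).2
  have hR1R : ∀ v ∈ R1, v ∈ R := fun v hv => by
    rw [hR1def] at hv; rw [hRdef]; exact RS_mono Set.sdiff_subset hv
  have adjR : ∀ {u v e}, u ∈ R → G.ends e = s(u, v) → x v = 0 → v ∈ R := by
    intro u v e hu he hv
    rw [hRdef] at *; exact RS_step hu he hv
  have adjR1 : ∀ {u v e}, u ∈ R1 → G.ends e = s(u, v) → x v = 0 → v ∉ S → v ∈ R1 := by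
    intro u v e hu he hv hvS
    rw [hR1def] at *; exact RS_step hu he ⟨hv, hvS⟩
  have key : ∀ L, L ≠ [] → G.Wk s L s → NB L → 1 ≤ (L.map (fun d => x d.2.2)).sum := by
    intro L h1 h2 h3
    obtain ⟨W, hW, hle⟩ := exists_scycle s x hx0 hxs L.length L le_rfl h1 h2 h3
    exact (hcov W hW).trans hle
  have key0 : ∀ L, L ≠ [] → G.Wk s L s → NB L → ¬ ∀ d ∈ L, d.2.2 ∈ R := by
    intro L h1 h2 h3 h4
    have h5 := key L h1 h2 h3
    rw [sum_eq_zero (fun d hd => hRx _ (h4 d hd))] at h5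
    norm_num at h5
  have two : ∀ {P Q : List (V × E × V)} {a b v : V} {e e' : E},
      G.Wk s (P ++ ([(a, e, v), (v, e', b)] ++ Q)) s →
      NB (P ++ ([(a, e, v), (v, e', b)] ++ Q)) → (∀ d ∈ P, d.2.2 ∈ R) →
      (∀ d ∈ Q, d.2.2 ∈ R) → b ∈ R → 1 ≤ x v := by
    intro P Q a b v e e' h1 h2 h3 h4 h5
    have h6 := key _ (by simp) h1 h2
    simp only [List.map_append, List.sum_append] at h6
    rw [sum_eq_zero (fun d hd => hRx _ (h3 d hd)), sum_eq_zero (fun d hd => hRx _ (h4 d hd))] at h6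
    simpa [hRx b h5] using h6
  have twoR : ∀ v, v ∉ R → G.Two R v → 1 ≤ x v := by
    rintro v hv ⟨e, e', a, b, hee, ha, hb, he, he'⟩
    rw [hRdef] at hv ha hb
    obtain ⟨P, Q, h1, h2, h3, h4⟩ := two_edges ha hb hv hee he he'
    rw [← hRdef] at h3 h4 hb
    exact two h1 h2 h3 h4 hb
  have twoR1 : ∀ v, v ∉ R1 → G.Two R1 v → 1 ≤ x v ∧ v ∈ S := by
    rintro v hv ⟨e, e', a, b, hee, ha, hb, he, he'⟩
    rw [hR1def] at hv ha hb
    obtain ⟨P, Q, h1, h2, h3, h4⟩ := two_edges ha hb hv hee he he'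
    rw [← hR1def] at h3 h4 hb
    refine ⟨two h1 h2 (fun d hd => hR1R _ (h3 d hd)) (fun d hd => hR1R _ (h4 d hd)) (hR1R _ hb), ?_⟩
    by_contra hvS
    obtain ⟨W, hW, hWS⟩ := exists_cycle S _ _ s le_rfl (by simp) h1 h2 (by
      intro d hd
      simp only [List.mem_append, List.mem_cons, List.not_mem_nil, or_false] at hd
      rcases hd with hd | (rfl | rfl) | hd
      · exact hR1S _ (h3 d hd)
      · exact hvS
      · exact hR1S _ hb
      · exact hR1S _ (h4 d hd))
    obtain ⟨i, hi⟩ := hS W hW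
    exact hWS i hi
  have hy : G.IsSCycleCover s (G.bdry R1) := by
    refine bdry_cover hsR1 ?_
    intro W hW
    by_contra hcon
    push Not at hcon
    have h1 := hcov W hW
    rw [Finset.sum_eq_zero (fun i _ => hRx _ (hR1R _ (hcon i)))] at h1
    norm_num at h1
  have hle := hmin _ hy
  obtain ⟨S', hS'⟩ : ∃ S' : Set V, S' = (S \ R) ∪ {v | x v = 1} ∪
    {v | x v = 1 / 2 ∧ ¬ G.One R1 v} := ⟨_, rfl⟩
  have hmem : ∀ v, v ∈ S' ↔ (v ∈ S ∧ v ∉ R) ∨ x v = 1 ∨ (x v = 1 / 2 ∧ ¬ G.One R1 v) := by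
    intro v; rw [hS']; simp [or_assoc]
  refine ⟨S', ?_, ?_, ?_⟩
  · -- feedback vertex set
    intro C hC
    by_contra hcon
    push Not at hcon
    have cross : ∀ e q w, q ∈ R → q ∉ R1 → w ∉ S' → G.ends e = s(q, w) → w ∈ R := by
      intro e q w hq hq1 hw he
      by_contra hwR
      have hx00 : x w ≠ 0 := fun h => hwR (adjR hq he h)
      rw [hmem] at hw
      push Not at hw
      have hxh : x w = 1 / 2 := by
        rcases hhalf w with h | h | h
        · exact absurd h hx00
        · exact h
        · exact absurd h hw.2.1
      obtain ⟨e', a, ha, he'⟩ := hw.2.2 hxh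
      have hne : e ≠ e' := by
        rintro rfl
        rw [he, Sym2.eq_iff] at he'
        rcases he' with h | h
        · exact hq1 (h.1 ▸ ha)
        · exact hwR (h.2 ▸ hR1R a ha)
      have := twoR w hwR ⟨e, e', q, a, hne, hq, hR1R a ha, he, he'⟩
      rw [hxh] at this
      norm_num at this
    have hLw := wk_darts C
    have hpw := darts_pairwise hC.2.1
    rw [← hC.1] at hLw
    have hLs : ∀ d ∈ darts C, d.1 ∉ S' ∧ d.2.2 ∉ S' := by
      intro d hd
      obtain ⟨i, rfl⟩ := mem_darts.1 hd
      exact ⟨hcon _, hcon _⟩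
    have hne : darts C ≠ [] := by
      intro h
      have := mem_darts (W := C).2 ⟨⟨0, C.len_pos⟩, rfl⟩
      rw [h] at this; simp at this
    have htgt : ∀ i, ∃ d ∈ darts C, d.2.2 = C.verts i := by
      intro i
      by_cases hi : i = 0
      · subst hi
        have h1 : C.verts 0 = C.verts (Fin.last _) := hC.1
        refine ⟨_, mem_darts.2 ⟨⟨C.len - 1, by have := C.len_pos; omega⟩, rfl⟩, ?_⟩
        rw [h1]
        show C.verts _ = _
        congr 1
        apply Fin.ext
        have := C.len_pos
        simp; omega
      · obtain ⟨j, rfl⟩ := Fin.exists_succ_eq_of_ne_zero hi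
        exact ⟨_, mem_darts.2 ⟨j, rfl⟩, rfl⟩
    by_cases hQ : ∃ d ∈ darts C, d.2.2 ∈ R ∧ d.2.2 ∉ R1
    · by_cases hall : ∃ d ∈ darts C, ¬ (d.1 ∈ R ∧ d.1 ∉ R1)
      · obtain ⟨d, hd, hdQ⟩ := hall
        obtain ⟨A, B, hAB⟩ := List.append_of_mem hd
        rw [hAB] at hLw hpw hLs hQ
        have hw2 := wk_rotate hLw
        have hn2 : NB (d :: B ++ A) := (pw_rotate hpw).isChain
        have hQ2 : ∃ f ∈ d :: B ++ A, f.2.2 ∈ R ∧ f.2.2 ∉ R1 := by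
          obtain ⟨f, hf, hf2⟩ := hQ
          refine ⟨f, ?_, hf2⟩
          simp only [List.mem_append] at hf ⊢; tauto
        have hLs2 : ∀ f ∈ d :: B ++ A, f.1 ∉ S' ∧ f.2.2 ∉ S' := by
          intro f hf
          apply hLs
          simp only [List.mem_append] at hf ⊢; tauto
        obtain ⟨A2, f, B2, h2, hfQ, hA2⟩ := split_first hQ2
        rw [h2] at hw2 hn2 hLs2
        obtain ⟨w, hwA, hwf, hfd, hwB⟩ := wk_append.1 hw2
        have hfnQ : ¬ (f.1 ∈ R ∧ f.1 ∉ R1) := by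
          rw [hwf]
          exact wk_end (p := fun v => ¬ (v ∈ R ∧ v ∉ R1)) hwA hdQ hA2
        have hB2 : ∃ g ∈ B2, ¬ (g.2.2 ∈ R ∧ g.2.2 ∉ R1) := by
          by_contra hcon2
          push Not at hcon2
          exact hdQ (wk_end (p := fun v => (v ∈ R ∧ v ∉ R1)) hwB hfQ hcon2)
        obtain ⟨M, g, B3, h3, hgQ, hM⟩ := split_first hB2
        simp only [not_not] at hM
        rw [h3] at hwB hn2 hLs2
        obtain ⟨w2, hwM, hwg, hgd, _⟩ := wk_append.1 hwB
        have hg1 : g.1 ∈ R ∧ g.1 ∉ R1 := by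
          rw [hwg]
          exact wk_end (p := fun v => (v ∈ R ∧ v ∉ R1)) hwM hfQ hM
        have hgR : g.2.2 ∈ R :=
          cross g.2.1 g.1 g.2.2 hg1.1 hg1.2 (hLs2 g (by simp)).2 hgd
        have hfR : f.1 ∈ R :=
          cross f.2.1 f.2.2 f.1 hfQ.1 hfQ.2 (hLs2 f (by simp)).1 (by rw [hfd, Sym2.eq_swap])
        have hgR1 : g.2.2 ∈ R1 := by by_contra h; exact hgQ ⟨hgR, h⟩
        have hfR1 : f.1 ∈ R1 := by by_contra h; exact hfnQ ⟨hfR, h⟩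
        have hseg : G.Wk f.1 (f :: (M ++ [g])) g.2.2 :=
          ⟨rfl, hfd, wk_append.2 ⟨w2, hwM, hwg, hgd, rfl⟩⟩
        have hsegn : NB (f :: (M ++ [g])) := nb_infix ⟨A2, B3, by simp⟩ hn2
        obtain ⟨P, Q, j1, j2, j3, j4⟩ := join (A := {v | x v = 0} \ S) (s := s)
          (hR1def ▸ hfR1) (hR1def ▸ hgR1) hseg hsegn (by simp)
          (by rw [← hR1def]; simpa using hfQ.2)
          (by
            rw [← hR1def]
            intro d hd
            rw [show f :: (M ++ [g]) = (f :: M) ++ [g] by simp, List.getLast?_append] at hd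
            simp at hd
            rw [← hd]; exact hg1.2)
        rw [← hR1def] at j3 j4
        refine key0 _ (by simp) j1 j2 ?_
        intro a ha
        simp only [List.mem_append, List.mem_cons, List.not_mem_nil, or_false] at ha
        rcases ha with ha | (rfl | ha | rfl) | ha
        · exact hR1R _ (j3 a ha)
        · exact hfQ.1
        · exact (hM a ha).1
        · exact hgR
        · exact hR1R _ (j4 a ha)
      · push Not at hall
        have hin : ∀ d ∈ darts C, d.2.2 ∈ R := by
          intro d hd
          have h1 := hall d hd
          exact cross d.2.1 d.1 d.2.2 h1.1 h1.2 (hLs d hd).2 (wk_dart hLw hd)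
        have hst : C.start ∈ R := by
          obtain ⟨d, hd, h⟩ := htgt 0
          rw [show C.start = C.verts 0 from rfl, ← h]; exact hin d hd
        rw [hRdef] at hst hin
        obtain ⟨L', h1, h2, h3, h4⟩ := closed_at_s hst hne hLw hpw.isChain hin
        rw [← hRdef] at h4
        exact key0 L' h1 h2 h3 h4
    · push Not at hQ
      obtain ⟨i, hi⟩ := hS C hC
      obtain ⟨d, hd, hdi⟩ := htgt i
      have h1 := hcon i
      rw [hmem] at h1
      push Not at h1
      exact hR1S _ (hdi ▸ hQ d hd (hdi ▸ h1.1 hi)) hi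
  · -- size
    have hpt : ∀ v, 2 * (G.bdry R1 v - x v) ≤
        (if v ∈ S then (1 : ℝ) else 0) - (if v ∈ S' then (1 : ℝ) else 0) := by
      intro v
      have hm := hmem v
      by_cases hvR : v ∈ R
      · have hxv := hRx v hvR
        have hS'v : v ∉ S' := by
          rw [hm, hxv]; norm_num; exact fun _ => hvR
        rw [if_neg hS'v, hxv]
        by_cases hv1 : v ∈ R1
        · rw [bdry, if_pos hv1, if_neg (hR1S v hv1)]; norm_num
        · have hT : ¬ G.Two R1 v := fun h => by
            have := (twoR1 v hv1 h).1
            rw [hxv] at this; norm_num at this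
          rw [bdry, if_neg hv1, if_neg hT]
          by_cases hO : G.One R1 v
          · have hvS : v ∈ S := by
              by_contra hvS
              obtain ⟨e, a, ha, he⟩ := hO
              exact hv1 (adjR1 ha he hxv hvS)
            rw [if_pos hO, if_pos hvS]; norm_num
          · rw [if_neg hO]; split_ifs <;> norm_num
      · have hv1 : v ∉ R1 := fun h => hvR (hR1R v h)
        rw [bdry, if_neg hv1]
        rcases hhalf v with h | h | h
        · have hT : ¬ G.Two R1 v := fun h' => by
            have := (twoR1 v hv1 h').1
            rw [h] at this; norm_num at this
          have hO : ¬ G.One R1 v := by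
            rintro ⟨e, a, ha, he⟩
            exact hvR (adjR (hR1R a ha) he h)
          have hiff : v ∈ S' ↔ v ∈ S := by
            rw [hm, h]; norm_num; exact fun _ => hvR
          rw [if_neg hT, if_neg hO, h]
          simp [hiff]
        · have hT : ¬ G.Two R1 v := fun h' => by
            have := (twoR1 v hv1 h').1
            rw [h] at this; norm_num at this
          rw [if_neg hT, h]
          by_cases hO : G.One R1 v
          · have hiff : v ∈ S' ↔ v ∈ S := by
              rw [hm, h]; norm_num; tauto
            rw [if_pos hO]
            simp [hiff]
          · have : v ∈ S' := hm.2 (Or.inr (Or.inr ⟨h, hO⟩))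
            rw [if_neg hO, if_pos this]
            split_ifs <;> norm_num
        · have : v ∈ S' := hm.2 (Or.inr (Or.inl h))
          rw [if_pos this, h]
          by_cases hT : G.Two R1 v
          · rw [if_pos hT, if_pos (twoR1 v hv1 hT).2]; norm_num
          · rw [if_neg hT]; split_ifs <;> norm_num
    have hsum := Finset.sum_le_sum (s := Finset.univ) (fun v _ => hpt v)
    rw [← Finset.mul_sum, Finset.sum_sub_distrib, Finset.sum_sub_distrib] at hsum
    have hc : ∀ T : Set V, ∑ v, (if v ∈ T then (1 : ℝ) else 0) = T.ncard := by
      intro T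
      rw [Finset.sum_boole, Set.ncard_eq_toFinset_card']
      congr 2
      ext v; simp
    rw [hc, hc] at hsum
    have : (S'.ncard : ℝ) ≤ S.ncard := by linarith
    exact_mod_cast this
  · intro v hv
    exact (hmem v).2 (Or.inr (Or.inl hv))

theorem fvs_le [Fintype V] {E' : Type} (G : Multigraph V E) (G' : Multigraph V E')
    (h : ∀ S, G'.IsFVS S → ∃ S', G.IsFVS S' ∧ S'.ncard ≤ S.ncard) : G.fvs ≤ G'.fvs := by
  have hne : {n : ℕ | ∃ S : Set V, G'.IsFVS S ∧ S.ncard = n}.Nonempty :=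
    ⟨_, Set.univ, fun W _ => ⟨0, Set.mem_univ _⟩, rfl⟩
  obtain ⟨S, hS, hn⟩ := Nat.sInf_mem hne
  obtain ⟨S', hS', hle⟩ := h S hS
  calc G.fvs ≤ S'.ncard := Nat.sInf_le ⟨S', hS', rfl⟩
    _ ≤ S.ncard := hle
    _ = G'.fvs := hn

/-- If every edge of a cycle corresponds to an edge of `G'`, the cycle is hit. -/
theorem transfer {E' : Type} {G : Multigraph V E} {G' : Multigraph V E'} {S : Set V}
    (hS : G'.IsFVS S) (W : G.Walk) (hW : W.IsCycle) (g : Fin W.len → E')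
    (hg : ∀ i, G'.ends (g i) = G.ends (W.edges i)) (hinj : Function.Injective g) :
    ∃ i, W.verts i ∈ S :=
  hS ⟨W.len, W.len_pos, W.verts, g, fun i => (hg i).trans (W.valid i)⟩ ⟨hW.1, hinj, hW.2.2⟩

theorem edge_verts {G : Multigraph V E} (W : G.Walk) (j : Fin W.len) {v : V}
    (h : v ∈ G.ends (W.edges j)) : ∃ i, W.verts i = v := by
  rw [W.valid j, Sym2.mem_iff] at h
  rcases h with h | h
  · exact ⟨_, h.symm⟩
  · exact ⟨_, h.symm⟩

/-- A cycle avoiding `X` contains no edge of `B`. -/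
theorem cycle_not_inB {G : Multigraph V E} {X : Set V} {s : V} (W : G.Walk) (hW : W.IsCycle)
    (hX : ∀ i, W.verts i ∉ X) (j : Fin W.len) : ¬ G.InB s X (W.edges j) := by
  rintro ⟨u, hu, hus, _, _, hreach, _⟩
  have hLw := wk_darts W
  have hpw := darts_pairwise hW.2.1
  rw [← hW.1] at hLw
  have hmem : (W.verts j.castSucc, W.edges j, W.verts j.succ) ∈ darts W := mem_darts.2 ⟨j, rfl⟩
  have hXd : ∀ d ∈ darts W, d.1 ∉ X ∧ d.2.2 ∉ X := by
    intro d hd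
    obtain ⟨i, rfl⟩ := mem_darts.1 hd
    exact ⟨hX _, hX _⟩
  obtain ⟨d, hd⟩ : ∃ d, d = (W.verts j.castSucc, W.edges j, W.verts j.succ) := ⟨_, rfl⟩
  rw [← hd] at hmem
  have hde : d.2.1 = W.edges j := by rw [hd]
  obtain ⟨A, B, hAB⟩ := List.append_of_mem hmem
  rw [hAB] at hLw hpw hXd
  have hw2 := wk_rotate hLw
  have hp2 : (d :: (B ++ A)).Pairwise _ := pw_rotate hpw
  have hrest : G.Wk d.2.2 (B ++ A) d.1 := hw2.2.2
  have hdd := hw2.2.1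
  have hXBA : ∀ f ∈ B ++ A, f.1 ∉ X ∧ f.2.2 ∉ X := by
    intro f hf; apply hXd
    simp only [List.mem_append, List.mem_cons] at hf ⊢; tauto
  have hXdd : d.1 ∉ X ∧ d.2.2 ∉ X := hXd d (by simp)
  have hgen : ∀ (L : List (V × E × V)) (a b : V), G.Wk a L b → a ≠ b → a ∉ X →
      (∀ f ∈ L, f.2.2 ∉ X ∧ f.2.1 ≠ W.edges j) → G.Reach X {W.edges j} a b := by
    intro L a b hL hab ha hf
    have hne : L ≠ [] := by rintro rfl; exact hab hL
    refine Or.inr ⟨toWalk hL hne, ?_, ?_, toWalk_start hL hne, toWalk_finish hL hne⟩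
    · exact toWalk_verts hL hne (· ∉ X) ha (fun f h => (hf f h).1)
    · intro i
      exact (hf _ (List.getElem_mem i.isLt)).2
  have hne : ∀ f ∈ B ++ A, f.2.1 ≠ W.edges j := by
    intro f hf h
    exact (List.pairwise_cons.1 hp2).1 f hf (hde.trans h.symm)
  rw [hde, hu, Sym2.eq_iff] at hdd
  rcases hdd with ⟨h1, h2⟩ | ⟨h1, h2⟩
  · apply hreach
    refine hgen ((B ++ A).map flipD).reverse s u ?_ (Ne.symm hus) (h1 ▸ hXdd.1) ?_
    · rw [h1, h2]; exact wk_reverse hrest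
    · intro f hf
      simp only [List.mem_reverse, List.mem_map] at hf
      obtain ⟨q, hq, rfl⟩ := hf
      exact ⟨(hXBA q hq).1, hne q hq⟩
  · apply hreach
    refine hgen (B ++ A) s u ?_ (Ne.symm hus) (h1 ▸ hXdd.2) ?_
    · rw [h1, h2]; exact hrest
    · intro f hf
      exact ⟨(hXBA f hf).2, hne f hf⟩

theorem fvs_of_reduced {G : Multigraph V E} {s : V} {x : V → ℝ} (hxs : x s = 0) {S : Set V}
    (hS : (G.reduced s x).IsFVS S) : G.IsFVS S := by
  intro W hW
  by_contra hcon
  push Not at hcon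
  have hB : ∀ j, ¬ G.InB s {v | x v = 1} (W.edges j) := by
    by_cases hs : s ∈ S
    · rintro j ⟨u, hu, _⟩
      obtain ⟨i, hi⟩ := edge_verts W j (v := s) (by rw [hu]; simp)
      exact hcon i (hi ▸ hs)
    · intro j
      refine cycle_not_inB W hW ?_ j
      intro i hi
      have hi : x (W.verts i) = 1 := hi
      have hne : W.verts i ≠ s := by
        intro h; rw [h, hxs] at hi; norm_num at hi
      let e : Bool → ({e : E // ¬ G.InB s {v : V | x v = 1} e} ⊕ ({v : V // x v = 1} × Bool)) :=
        fun b => Sum.inr (⟨W.verts i, hi⟩, b)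
      have hw : (G.reduced s x).Wk s [(s, e false, W.verts i), (W.verts i, e true, s)] s :=
        ⟨rfl, rfl, rfl, Sym2.eq_swap, rfl⟩
      obtain ⟨C, hC, hCS⟩ := exists_cycle (G := G.reduced s x) S _ _ s le_rfl (by simp) hw
        (by simp [NB, e]) (by
          intro d hd
          simp only [List.mem_cons, List.not_mem_nil, or_false] at hd
          rcases hd with rfl | rfl
          · exact hcon i
          · exact hs)
      obtain ⟨k, hk⟩ := hS C hC
      exact hCS k hk
  obtain ⟨i, hi⟩ := transfer hS W hW (fun j => Sum.inl ⟨W.edges j, hB j⟩) (fun _ => rfl) (by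
    intro a b hab
    simp only [Sum.inl.injEq, Subtype.mk.injEq] at hab
    exact hW.2.1 hab)
  exact hcon i hi

theorem reduced_of_fvs {G : Multigraph V E} {s : V} {x : V → ℝ} {S : Set V}
    (hS : G.IsFVS S) (h : s ∈ S ∨ {v | x v = 1} ⊆ S) : (G.reduced s x).IsFVS S := by
  intro W hW
  by_contra hcon
  push Not at hcon
  have hl : ∀ j, ∃ e, W.edges j = Sum.inl e := by
    intro j
    rcases he : W.edges j with e | p
    · exact ⟨e, rfl⟩
    · exfalso
      have hends : (G.reduced s x).ends (W.edges j) = s(s, p.1.val) := by rw [he]; rfl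
      rcases h with h | h
      · obtain ⟨i, hi⟩ := edge_verts W j (v := s) (by rw [hends]; simp)
        exact hcon i (by rw [hi]; exact h)
      · obtain ⟨i, hi⟩ := edge_verts W j (v := p.1.val) (by rw [hends]; simp)
        have hp : p.1.val ∈ S := h p.1.property
        rw [← hi] at hp
        exact hcon i hp
  choose g hg using hl
  obtain ⟨i, hi⟩ := transfer hS W hW (fun j => (g j).val) (fun j => by rw [hg j]; rfl) (by
    intro a b hab
    apply hW.2.1
    rw [hg a, hg b, Subtype.ext hab])
  exact hcon i hi

end Multigraph

/-- the `s`-cycle cover reduction preserves the minimum feedback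
vertex set size: `fvs(G) = fvs(G')`. -/
theorem stmt6_reduced_fvs_eq {V E : Type} [Fintype V] [Fintype E] (G : Multigraph V E)
    (hloop : G.LoopFree) (s : V) (x : V → ℝ)
    (hx : G.IsMinSCycleCover s x) (hhalf : Multigraph.HalfIntegral x) :
    G.fvs = (G.reduced s x).fvs := by
  apply le_antisymm
  · exact Multigraph.fvs_le _ _ (fun S hS => ⟨S, Multigraph.fvs_of_reduced hx.1.2.1 hS, le_rfl⟩)
  · refine Multigraph.fvs_le _ _ (fun S hS => ?_)
    by_cases hs : s ∈ S
    · exact ⟨S, Multigraph.reduced_of_fvs hS (Or.inl hs), le_rfl⟩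
    · obtain ⟨S1, h1, h2, h3⟩ := Multigraph.persist G s x hx hhalf S hS hs
      exact ⟨S1, Multigraph.reduced_of_fvs h1 (Or.inr h3), h2⟩
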